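/- If 0 < μ < C_H(Ω), then every large solution u of (*) satisfies lim_{δ(x)→0} u(x) / log(δ(x)^{-2}) = 1. -/

import Mathlib

/-! Both bounds are pointwise maximum-principle arguments; neither needs regularity of `δ`.

*Lower bound.* In a strip `δ < ρ` where `u ≥ M` with `μ M > 2 N + 1`, compare `u` with
`w = -log (δ² + τ) - K`, where `K` makes `w ≤ M` on `δ = ρ`. As `w` is bounded and `u → ∞` at `∂Ω`,
a positive value of `w - u` would give an interior positive maximum `p`. There
`Δu = eᵘ - μ u / δ² ≤ (1 - μ M) / δ²`, since `eᵘ ≤ eʷ ≤ δ⁻²`. But `w` is touched from below at `p`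
by `-log (|x - y|² + τ) - K`, `y ∉ Ω` a nearest point to `p`, whose Laplacian is at least
`-2 N / δ²`: a contradiction. Taking `τ = δ(x)²` at each point `x` gives `u ≥ log δ⁻² - C`.

*Upper bound.* On the ball of radius `r = δ(x₀) / 2` about `x₀`, the function
`(r² - |x - x₀|²)² eᵘ` has an interior maximum `p`. The second-order condition at `p`, with
`δ ≥ r` on the ball, bounds the maximum by `r² (A + B log (1 / r))`. Evaluating at `x₀` gives
`u ≤ log δ⁻² + log (A + B log (1 / r)) + C`, and the middle term is at most `κ log δ⁻² + C_κ`.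

The second-order conditions come from `lap_touch`; the bounds are `lower_bound` and `upper_bound`. -/

open MeasureTheory Real Filter Topology Set

noncomputable section

abbrev Euc (N : ℕ) := EuclideanSpace ℝ (Fin N)

/-- Distance of `x` to the boundary of `Ω` (distance to the complement). -/
def bdist {N : ℕ} (Ω : Set (Euc N)) (x : Euc N) : ℝ := Metric.infDist x Ωᶜ

/-- The strip `Ω_ρ = {x ∈ Ω : δ(x) < ρ}`. -/
def bstrip {N : ℕ} (Ω : Set (Euc N)) (ρ : ℝ) : Set (Euc N) := {x ∈ Ω | bdist Ω x < ρ}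

/-- `C³`-regularity of the boundary, expressed through the regularity of the
distance function in a strip near the boundary. -/
def BoundaryC3 {N : ℕ} (Ω : Set (Euc N)) : Prop :=
  ∃ ρ > 0, ContDiffOn ℝ 3 (bdist Ω) (bstrip Ω ρ)

/-- The Laplacian of `u`. -/
def lap {N : ℕ} (u : Euc N → ℝ) (x : Euc N) : ℝ :=
  ∑ i : Fin N, fderiv ℝ (fun y => fderiv ℝ u y (EuclideanSpace.single i 1)) x
    (EuclideanSpace.single i 1)

/-- A classical solution of `−Δu − (μ/δ²)u + e^u = 0` in `Ω`. -/
def IsSolution {N : ℕ} (μ : ℝ) (Ω : Set (Euc N)) (u : Euc N → ℝ) : Prop :=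
  ContDiffOn ℝ 2 u Ω ∧
  ∀ x ∈ Ω, -lap u x - (μ / (bdist Ω x) ^ 2) * u x + Real.exp (u x) = 0

/-- A large solution: `u(x) → ∞` as `δ(x) → 0`. -/
def IsLarge {N : ℕ} (Ω : Set (Euc N)) (u : Euc N → ℝ) : Prop :=
  ∀ M : ℝ, ∃ ε > 0, ∀ x ∈ Ω, bdist Ω x < ε → M ≤ u x

/-- The Hardy constant of `Ω`: the infimum of the Rayleigh quotients
`∫ |∇φ|² / ∫ φ²/δ²` over nonzero test functions `φ ∈ C_c^∞(Ω)`. -/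
def hardyConst {N : ℕ} (Ω : Set (Euc N)) : ℝ :=
  sInf { r : ℝ | ∃ φ : Euc N → ℝ, ContDiff ℝ (⊤ : ℕ∞) φ ∧ HasCompactSupport φ ∧
    tsupport φ ⊆ Ω ∧ φ ≠ 0 ∧
    r = (∫ x in Ω, ‖gradient φ x‖ ^ 2) / (∫ x in Ω, (φ x) ^ 2 / (bdist Ω x) ^ 2) }

/-! ### Second-order conditions at a maximum -/

/-- Second-order necessary condition at a local maximum, in one variable. -/
theorem second_deriv_nonpos {f f' : ℝ → ℝ} {A : ℝ}
    (h1 : ∀ᶠ t in 𝓝 (0 : ℝ), HasDerivAt f (f' t) t) (h2 : HasDerivAt f' A 0)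
    (hm : IsLocalMax f 0) : A ≤ 0 := by
  by_contra hA
  push Not at hA
  have e1 : deriv f =ᶠ[𝓝 0] f' := h1.mono fun t ht => ht.deriv
  have e2 : deriv (deriv f) 0 = A := by rw [e1.deriv_eq, h2.deriv]
  -- If `A > 0` then `0` is also a local minimum, so `f` is locally constant and `A = 0`.
  have hmin : IsLocalMin f 0 := isLocalMin_of_deriv_deriv_pos (by rw [e2]; exact hA)
    hm.deriv_eq_zero h1.self_of_nhds.continuousAt
  have hc : f =ᶠ[𝓝 0] fun _ => f 0 := by
    filter_upwards [hm, hmin] with t a b using le_antisymm a b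
  have hd : deriv (deriv f) 0 = 0 := by
    rw [hc.deriv.deriv_eq]; simp
  linarith

/-- Second-order condition for `s·u + k·log (c₀ + σ|x-a|²)` at a local maximum `p`, summed over
the coordinate directions. The case `s = 1` bounds `Δu` from above, the case `s = -1` from below. -/
theorem lap_touch {N : ℕ} {u : Euc N → ℝ} {p a : Euc N} {s k c₀ σ : ℝ}
    (hu : ContDiffAt ℝ 2 u p) (hc : 0 < c₀ + σ * ‖p - a‖ ^ 2)
    (hm : IsLocalMax (fun x => s * u x + k * Real.log (c₀ + σ * ‖x - a‖ ^ 2)) p) :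
    s * lap u p + k * (2 * N * σ / (c₀ + σ * ‖p - a‖ ^ 2)
      - 4 * σ ^ 2 * ‖p - a‖ ^ 2 / (c₀ + σ * ‖p - a‖ ^ 2) ^ 2) ≤ 0 := by
  set c := c₀ + σ * ‖p - a‖ ^ 2 with hcdef
  have key : ∀ i : Fin N, s * fderiv ℝ (fun y => fderiv ℝ u y (EuclideanSpace.single i 1)) p
      (EuclideanSpace.single i 1) + k * (2 * σ / c - 4 * σ ^ 2 * (p - a) i ^ 2 / c ^ 2) ≤ 0 := by
    intro i
    set e : Euc N := EuclideanSpace.single i 1 with he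
    have hline : ∀ t : ℝ, HasDerivAt (fun t : ℝ => p + t • e) e t := by
      intro t
      simpa using ((hasDerivAt_id t).smul_const e).const_add p
    have hcont : Tendsto (fun t : ℝ => p + t • e) (𝓝 0) (𝓝 p) := by
      have := (hline 0).continuousAt.tendsto
      simpa using this
    have hq : ∀ t : ℝ, c₀ + σ * ‖p + t • e - a‖ ^ 2
        = c + 2 * σ * (p - a) i * t + σ * t ^ 2 := by
      intro t
      have h0 : p + t • e - a = (p - a) + t • e := by abel
      rw [h0, norm_add_sq_real, inner_smul_right, norm_smul, he, EuclideanSpace.inner_single_right,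
        PiLp.norm_single, hcdef]
      simp
      ring
    set b := (p - a) i
    have hqd : ∀ t : ℝ, HasDerivAt (fun t : ℝ => c + 2 * σ * b * t + σ * t ^ 2)
        (2 * σ * b + 2 * σ * t) t := by
      intro t
      have h1 := (((hasDerivAt_id t).const_mul (2 * σ * b)).const_add c).add
        ((hasDerivAt_pow 2 t).const_mul σ)
      refine h1.congr_deriv ?_
      norm_num
      ring
    have hqpos : ∀ᶠ t in 𝓝 (0 : ℝ), 0 < c + 2 * σ * b * t + σ * t ^ 2 := by
      have := (hqd 0).continuousAt
      refine this.eventually (lt_mem_nhds ?_)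
      simpa using hc
    have hud : ∀ᶠ x in 𝓝 p, DifferentiableAt ℝ u x := by
      filter_upwards [hu.eventually (by simp)] with x hx using hx.differentiableAt (by norm_num)
    have hfd : DifferentiableAt ℝ (fun y => fderiv ℝ u y e) p :=
      ((hu.fderiv_right (m := 1) (by norm_num)).differentiableAt (by norm_num)).clm_apply
        (differentiableAt_const e)
    refine second_deriv_nonpos
      (f := fun t => s * u (p + t • e) + k * Real.log (c + 2 * σ * b * t + σ * t ^ 2))
      (f' := fun t => s * fderiv ℝ u (p + t • e) e
        + k * ((2 * σ * b + 2 * σ * t) / (c + 2 * σ * b * t + σ * t ^ 2))) ?_ ?_ ?_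
    · filter_upwards [hqpos, hcont.eventually hud] with t ht hd
      exact ((hd.hasFDerivAt.comp_hasDerivAt t (hline t)).const_mul s).add
        (((hqd t).log ht.ne').const_mul k)
    · have h1 : HasDerivAt (fun t : ℝ => fderiv ℝ u (p + t • e) e)
          (fderiv ℝ (fun y => fderiv ℝ u y e) p e) 0 := by
        have h2 : HasFDerivAt (fun y => fderiv ℝ u y e) (fderiv ℝ (fun y => fderiv ℝ u y e) p)
            (p + (0 : ℝ) • e) := by
          simpa using hfd.hasFDerivAt
        exact h2.comp_hasDerivAt (0 : ℝ) (hline 0)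
      have h3 : HasDerivAt (fun t : ℝ => 2 * σ * b + 2 * σ * t) (2 * σ) 0 := by
        simpa using ((hasDerivAt_id (0 : ℝ)).const_mul (2 * σ)).const_add (2 * σ * b)
      have h4 := h3.div (hqd 0) (by simpa using hc.ne')
      refine ((h1.const_mul s).add (h4.const_mul k)).congr_deriv ?_
      have := hc.ne'
      simp only [mul_zero, add_zero, ne_eq, OfNat.ofNat_ne_zero, not_false_eq_true, zero_pow]
      field_simp
      ring
    · have := hcont.eventually hm
      filter_upwards [this] with t ht
      rw [← hq t]
      simpa [hcdef] using ht
  have hsum := Finset.sum_nonpos fun i (_ : i ∈ Finset.univ) => key i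
  have hn : ‖p - a‖ ^ 2 = ∑ i, (p - a) i ^ 2 := EuclideanSpace.real_norm_sq_eq _
  rw [Finset.sum_add_distrib, ← Finset.mul_sum, ← Finset.mul_sum, Finset.sum_sub_distrib,
    ← Finset.sum_div (f := fun i => 4 * σ ^ 2 * (p - a) i ^ 2), ← Finset.mul_sum (a := 4 * σ ^ 2),
    ← hn] at hsum
  simp only [Finset.sum_const, Finset.card_univ, Fintype.card_fin, nsmul_eq_mul] at hsum
  have e1 : (2 * N * σ / c : ℝ) = N * (2 * σ / c) := by ring
  rw [e1]
  exact hsum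

/-! ### Distance to the boundary -/

theorem mem_of_bdist_pos {N : ℕ} {Ω : Set (Euc N)} {x : Euc N} (h : 0 < bdist Ω x) : x ∈ Ω := by
  by_contra hx
  have : bdist Ω x = 0 := Metric.infDist_zero_of_mem (s := Ωᶜ) hx
  linarith

theorem bdist_pos {N : ℕ} {Ω : Set (Euc N)} (hΩo : IsOpen Ω) (hne : (Ωᶜ).Nonempty) {x : Euc N}
    (hx : x ∈ Ω) : 0 < bdist Ω x :=
  (hΩo.isClosed_compl.notMem_iff_infDist_pos hne).1 (by simpa using hx)

theorem continuous_bdist {N : ℕ} (Ω : Set (Euc N)) : Continuous (bdist Ω) :=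
  Metric.continuous_infDist_pt _

/-! ### Lower and upper bounds near the boundary -/

/-- Lower bound by comparison with `-log (δ² + τ) - K` in a thin strip. -/
theorem lower_bound {N : ℕ} (Ω : Set (Euc N)) (hΩo : IsOpen Ω) (hΩb : Bornology.IsBounded Ω)
    (hne : (Ωᶜ).Nonempty) {μ : ℝ} (hμ0 : 0 < μ) (u : Euc N → ℝ) (hu : IsSolution μ Ω u)
    (hL : IsLarge Ω u) :
    ∃ ρ > 0, ∃ C : ℝ, ∀ x ∈ Ω, bdist Ω x < ρ → Real.log ((bdist Ω x) ^ 2)⁻¹ - C ≤ u x := by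
  -- `M` is chosen so that `μ M > 2 N + 1`, which beats the Laplacian of the comparison function.
  set M : ℝ := (2 * N + 2) / μ with hM
  have hMμ : μ * M = 2 * N + 2 := by rw [hM]; field_simp
  have hMpos : 0 < M := by positivity
  obtain ⟨ε₀, hε₀, hlarge⟩ := hL M
  set ρ : ℝ := min (ε₀ / 2) (1 / 2) with hρ
  have hρpos : 0 < ρ := by positivity
  have hρε : ρ < ε₀ := (min_le_left _ _).trans_lt (by linarith)
  have hρ1 : ρ ≤ 1 / 2 := min_le_right _ _
  set K : ℝ := -Real.log (ρ ^ 2) with hK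
  have hKpos : 0 ≤ K := by
    have : Real.log (ρ ^ 2) ≤ 0 := Real.log_nonpos (by positivity) (by nlinarith)
    linarith
  have main : ∀ τ > 0, ∀ x ∈ Ω, bdist Ω x < ρ → -Real.log ((bdist Ω x) ^ 2 + τ) - K ≤ u x := by
    intro τ hτ x₁ hx₁ hd₁
    by_contra hcon
    push Not at hcon
    obtain ⟨η, hη, hηl⟩ := hL (-Real.log τ)
    have hwτ : ∀ x, -Real.log ((bdist Ω x) ^ 2 + τ) - K ≤ -Real.log τ := by
      intro x
      have := Real.log_le_log hτ (le_add_of_nonneg_left (sq_nonneg (bdist Ω x)))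
      linarith
    set S : Set (Euc N) := {x | η / 2 ≤ bdist Ω x ∧ bdist Ω x ≤ ρ} with hS
    have hSΩ : S ⊆ Ω := fun x hx => mem_of_bdist_pos (lt_of_lt_of_le (by positivity) hx.1)
    have hScpt : IsCompact S := by
      refine Metric.isCompact_of_isClosed_isBounded ?_ (hΩb.subset hSΩ)
      exact (isClosed_le continuous_const (continuous_bdist Ω)).inter
        (isClosed_le (continuous_bdist Ω) continuous_const)
    have hx₁S : x₁ ∈ S := by
      refine ⟨?_, hd₁.le⟩
      by_contra h
      have := hηl x₁ hx₁ (by linarith)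
      linarith [hwτ x₁]
    have hpos : ∀ x, 0 < (bdist Ω x) ^ 2 + τ := fun x => by positivity
    have hcontw : Continuous fun x => -Real.log ((bdist Ω x) ^ 2 + τ) - K :=
      ((((continuous_bdist Ω).pow 2).add continuous_const).log fun x => (hpos x).ne').neg.sub
        continuous_const
    obtain ⟨p, hpS, hpmax⟩ := hScpt.exists_isMaxOn ⟨x₁, hx₁S⟩
      (hcontw.continuousOn.sub (hu.1.continuousOn.mono hSΩ))
    have hpΩ := hSΩ hpS
    have hup : u p < -Real.log ((bdist Ω p) ^ 2 + τ) - K := by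
      have := hpmax hx₁S
      simp only [mem_ofPred_eq, Pi.sub_apply] at this
      linarith
    have hpη : η / 2 < bdist Ω p := by
      by_contra h
      have := hηl p hpΩ (by linarith)
      linarith [hwτ p]
    have hMp : M ≤ u p := hlarge p hpΩ (hpS.2.trans_lt hρε)
    have hpρ : bdist Ω p < ρ := by
      refine lt_of_le_of_ne hpS.2 fun h => ?_
      rw [h] at hup
      have := Real.log_le_log (by positivity : 0 < ρ ^ 2) (le_add_of_nonneg_right hτ.le)
      linarith
    have hSn : S ∈ 𝓝 p := by
      filter_upwards [(continuous_bdist Ω).continuousAt.eventually (lt_mem_nhds hpη),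
        (continuous_bdist Ω).continuousAt.eventually (gt_mem_nhds hpρ)] with x h1 h2
      exact ⟨h1.le, h2.le⟩
    -- Replacing `δ` by the distance to a nearest point `y` gives a smooth function touching from
    -- below at `p`, so no regularity of `δ` is needed.
    obtain ⟨y, hy, hyd⟩ := hΩo.isClosed_compl.exists_infDist_eq_dist hne p
    have hyd' : bdist Ω p = ‖p - y‖ := by rw [← dist_eq_norm]; exact hyd
    have hyle : ∀ x, bdist Ω x ≤ ‖x - y‖ := fun x => by
      rw [← dist_eq_norm]; exact Metric.infDist_le_dist_of_mem hy
    have hloc : IsLocalMax (fun x => (-1) * u x + (-1) * Real.log (τ + 1 * ‖x - y‖ ^ 2)) p := by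
      filter_upwards [hSn] with x hx
      have h1 := hpmax hx
      simp only [mem_ofPred_eq, Pi.sub_apply] at h1
      have h2 : Real.log ((bdist Ω x) ^ 2 + τ) ≤ Real.log (τ + 1 * ‖x - y‖ ^ 2) := by
        refine Real.log_le_log (hpos x) ?_
        have := pow_le_pow_left₀ Metric.infDist_nonneg (hyle x) 2
        change bdist Ω x ^ 2 ≤ _ at this
        linarith
      have h3 : Real.log ((bdist Ω p) ^ 2 + τ) = Real.log (τ + 1 * ‖p - y‖ ^ 2) := by
        rw [hyd', one_mul, add_comm]
      linarith
    have hlap := lap_touch (hu.1.contDiffAt (hΩo.mem_nhds hpΩ)) (by positivity) hloc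
    have heq := hu.2 p hpΩ
    rw [← hyd'] at hlap
    set d := bdist Ω p with hd
    have hdpos : 0 < d := by linarith
    have hd2 : 0 < d ^ 2 := by positivity
    have hexp : Real.exp (u p) ≤ 1 / d ^ 2 := by
      calc Real.exp (u p) ≤ Real.exp (-Real.log (d ^ 2 + τ)) := Real.exp_le_exp.2 (by linarith)
        _ = 1 / (d ^ 2 + τ) := by rw [Real.exp_neg, Real.exp_log (hpos p), one_div]
        _ ≤ 1 / d ^ 2 := one_div_le_one_div_of_le hd2 (by linarith)
    have hN : 2 * N * 1 / (τ + 1 * d ^ 2) ≤ 2 * N / d ^ 2 := by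
      rw [mul_one]
      exact div_le_div_of_nonneg_left (by positivity) hd2 (by linarith)
    have hneg : 0 ≤ 4 * 1 ^ 2 * d ^ 2 / (τ + 1 * d ^ 2) ^ 2 := by positivity
    have hmu : (2 * N + 2) / d ^ 2 ≤ μ / d ^ 2 * u p := by
      rw [← hMμ, div_mul_eq_mul_div]
      gcongr
    have : (2 * N + 2 : ℝ) / d ^ 2 = 2 * N / d ^ 2 + 1 / d ^ 2 + 1 / d ^ 2 := by ring
    have h1d : 0 < 1 / d ^ 2 := by positivity
    linarith
  refine ⟨ρ, hρpos, K + Real.log 2, fun x hx hd => ?_⟩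
  have hdpos := bdist_pos hΩo hne hx
  have := main ((bdist Ω x) ^ 2) (by positivity) x hx hd
  rw [← two_mul, Real.log_mul (by norm_num) (by positivity)] at this
  rw [Real.log_inv]
  linarith

set_option maxHeartbeats 800000 in
/-- Interior (Keller–Osserman) estimate on the ball `B(x, δ(x)/2)`. -/
theorem upper_bound {N : ℕ} (Ω : Set (Euc N)) (hΩo : IsOpen Ω)
    (hne : (Ωᶜ).Nonempty) {μ : ℝ} (hμ0 : 0 < μ) (u : Euc N → ℝ) (hu : IsSolution μ Ω u)
    (hL : IsLarge Ω u) (κ : ℝ) (hκ : 0 < κ) :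
    ∃ ρ > 0, ∃ C : ℝ, ∀ x ∈ Ω, bdist Ω x < ρ →
      u x ≤ (1 + κ) * Real.log ((bdist Ω x) ^ 2)⁻¹ + C := by
  obtain ⟨ε₀, hε₀, hlarge⟩ := hL 0
  set A : ℝ := 2 * (4 * N + 8) + 2 * μ * (|Real.log (2 * μ)| + 1) with hA
  set l : ℝ := κ / (2 * μ) with hl
  have hlpos : 0 < l := by positivity
  refine ⟨min (ε₀ / 2) 1, by positivity,
    2 * Real.log 2 + l * A + 2 * κ * Real.log 2 - Real.log l, ?_⟩
  intro x₀ hx₀ hd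
  have hdpos := bdist_pos hΩo hne hx₀
  have hd1 : bdist Ω x₀ < ε₀ / 2 := hd.trans_le (min_le_left _ _)
  have hd2 : bdist Ω x₀ < 1 := hd.trans_le (min_le_right _ _)
  set r : ℝ := bdist Ω x₀ / 2 with hr
  have hrpos : 0 < r := by positivity
  have hball : ∀ x ∈ Metric.closedBall x₀ r, r ≤ bdist Ω x ∧ bdist Ω x < ε₀ := by
    intro x hx
    rw [Metric.mem_closedBall] at hx
    have h1 : bdist Ω x₀ ≤ bdist Ω x + dist x₀ x := Metric.infDist_le_infDist_add_dist
    have h2 : bdist Ω x ≤ bdist Ω x₀ + dist x x₀ := Metric.infDist_le_infDist_add_dist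
    rw [dist_comm] at h1
    constructor <;> linarith
  have hballΩ : Metric.closedBall x₀ r ⊆ Ω := fun x hx =>
    mem_of_bdist_pos (hrpos.trans_le (hball x hx).1)
  have hx₀B : x₀ ∈ Metric.closedBall x₀ r := Metric.mem_closedBall_self hrpos.le
  -- Maximise `(r² - |x-x₀|²)² eᵘ`, which vanishes on the sphere and is positive at the centre.
  obtain ⟨p, hpB, hpmax⟩ := (isCompact_closedBall x₀ r).exists_isMaxOn ⟨x₀, hx₀B⟩
    (f := fun x => (r ^ 2 + (-1) * ‖x - x₀‖ ^ 2) ^ 2 * Real.exp (u x))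
    ((by fun_prop : Continuous fun x : Euc N => (r ^ 2 + (-1) * ‖x - x₀‖ ^ 2) ^ 2).continuousOn.mul
      (hu.1.continuousOn.mono hballΩ).rexp)
  have hpc : (r ^ 2) ^ 2 * Real.exp (u x₀)
      ≤ (r ^ 2 + (-1) * ‖p - x₀‖ ^ 2) ^ 2 * Real.exp (u p) := by
    have := hpmax hx₀B
    simpa using this
  have hpr : ‖p - x₀‖ < r := by
    rw [mem_closedBall_iff_norm] at hpB
    refine lt_of_le_of_ne hpB fun h => ?_
    rw [h] at hpc
    have h1 : 0 < (r ^ 2) ^ 2 * Real.exp (u x₀) := by positivity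
    have h2 : r ^ 2 + (-1) * r ^ 2 = 0 := by ring
    rw [h2] at hpc
    norm_num at hpc
    linarith
  have hpos_of : ∀ x : Euc N, ‖x - x₀‖ < r → 0 < r ^ 2 + (-1) * ‖x - x₀‖ ^ 2 := by
    intro x hx
    have := pow_lt_pow_left₀ hx (norm_nonneg _) two_ne_zero
    linarith
  have hloc : IsLocalMax (fun x => 1 * u x + 2 * Real.log (r ^ 2 + (-1) * ‖x - x₀‖ ^ 2)) p := by
    have hlogF : ∀ x : Euc N, ‖x - x₀‖ < r →
        Real.log ((r ^ 2 + (-1) * ‖x - x₀‖ ^ 2) ^ 2 * Real.exp (u x))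
          = 1 * u x + 2 * Real.log (r ^ 2 + (-1) * ‖x - x₀‖ ^ 2) := by
      intro x hx
      have := hpos_of x hx
      rw [Real.log_mul (by positivity) (by positivity), Real.log_exp, Real.log_pow]
      push_cast; ring
    filter_upwards [Metric.isOpen_ball.mem_nhds (mem_ball_iff_norm.2 hpr)] with x hx
    have h1 := hpmax (Metric.ball_subset_closedBall hx)
    rw [mem_ball_iff_norm] at hx
    have := hpos_of x hx
    rw [← hlogF x hx, ← hlogF p hpr]
    exact Real.log_le_log (by positivity) h1
  have hpΩ := hballΩ hpB
  have htpos := hpos_of p hpr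
  have hlap := lap_touch (hu.1.contDiffAt (hΩo.mem_nhds hpΩ)) htpos hloc
  have heq := hu.2 p hpΩ
  have hup : 0 ≤ u p := hlarge p hpΩ (hball p hpB).2
  have hs2 : ‖p - x₀‖ ^ 2 ≤ r ^ 2 := by linarith
  have hs0 : 0 ≤ ‖p - x₀‖ ^ 2 := sq_nonneg _
  generalize ‖p - x₀‖ ^ 2 = s at *
  obtain ⟨t, ht⟩ : ∃ t, t = r ^ 2 + (-1) * s := ⟨_, rfl⟩
  rw [← ht] at hlap htpos hpc
  have htr : t ≤ r ^ 2 := by linarith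
  have hδ : μ / (bdist Ω p) ^ 2 * u p ≤ μ / r ^ 2 * u p := by
    have := (hball p hpB).1
    gcongr
  have hineq : Real.exp (u p) ≤ (4 * N * t + 8 * s) / t ^ 2 + μ / r ^ 2 * u p := by
    have : (4 * N * t + 8 * s) / t ^ 2 = -(2 * (2 * N * (-1) / t - 4 * (-1) ^ 2 * s / t ^ 2)) := by
      field_simp; ring
    rw [this]
    linarith
  -- The rescaled variables: `q = t / r² ∈ (0, 1]` and `H = t² eᵘ / r²`.
  obtain ⟨q, hq⟩ : ∃ q, q = t / r ^ 2 := ⟨_, rfl⟩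
  have htq : t = q * r ^ 2 := by rw [hq]; field_simp
  have hqpos : 0 < q := by rw [hq]; positivity
  have hq1 : q ≤ 1 := by rw [hq]; exact (div_le_one (by positivity)).2 htr
  obtain ⟨H, hH⟩ : ∃ H, H = q ^ 2 * r ^ 2 * Real.exp (u p) := ⟨_, rfl⟩
  have hHpos : 0 < H := by rw [hH]; positivity
  set L : ℝ := -Real.log r with hLdef
  have hLpos : 0 ≤ L := by
    have := Real.log_nonpos hrpos.le (by linarith : r ≤ 1)
    linarith
  have hlogH : Real.log H = 2 * Real.log q - 2 * L + u p := by
    rw [hH, Real.log_mul (by positivity) (by positivity), Real.log_mul (by positivity)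
      (by positivity), Real.log_exp, Real.log_pow, Real.log_pow, hLdef]
    push_cast; ring
  have hH1 : H ≤ (4 * N + 8) + μ * (q ^ 2 * u p) := by
    have h1 : H ≤ q ^ 2 * r ^ 2 * ((4 * N * t + 8 * s) / t ^ 2 + μ / r ^ 2 * u p) := by
      rw [hH]; gcongr
    have h2 : q ^ 2 * r ^ 2 * ((4 * N * t + 8 * s) / t ^ 2 + μ / r ^ 2 * u p)
        = (4 * N * t + 8 * s) / r ^ 2 + μ * (q ^ 2 * u p) := by
      rw [hq]; field_simp
    have h3 : (4 * N * t + 8 * s) / r ^ 2 ≤ 4 * N + 8 := by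
      rw [div_le_iff₀ (by positivity)]
      have : (4 * N * t : ℝ) ≤ 4 * N * r ^ 2 := by gcongr
      nlinarith
    linarith
  have hqlog : -(2 * (q ^ 2 * Real.log q)) ≤ 1 := by
    have h1 := Real.one_sub_inv_le_log_of_pos hqpos
    have h2 : q ^ 2 * (1 - q⁻¹) ≤ q ^ 2 * Real.log q := by gcongr
    have h3 : q ^ 2 * (1 - q⁻¹) = q ^ 2 - q := by field_simp
    have h4 : q - q ^ 2 ≤ 1 / 4 := by
      have : (2 * q - 1) ^ 2 = 4 * q ^ 2 - 4 * q + 1 := by ring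
      linarith only [this, sq_nonneg (2 * q - 1)]
    linarith only [h2, h3, h4]
  have hqH : μ * (q ^ 2 * Real.log H) ≤ H / 2 + μ * |Real.log (2 * μ)| := by
    have h1 := Real.log_le_sub_one_of_pos (show 0 < H / (2 * μ) by positivity)
    rw [Real.log_div hHpos.ne' (by positivity)] at h1
    have h2 := le_abs_self (Real.log (2 * μ))
    have h4 : 0 ≤ H / (2 * μ) + |Real.log (2 * μ)| := by positivity
    have h5 : q ^ 2 ≤ 1 := pow_le_one₀ hqpos.le hq1
    have h3 : q ^ 2 * Real.log H ≤ 1 * (H / (2 * μ) + |Real.log (2 * μ)|) :=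
      (mul_le_mul_of_nonneg_left (by linarith) (sq_nonneg q)).trans
        (mul_le_mul_of_nonneg_right h5 h4)
    have h6 : H / 2 + μ * |Real.log (2 * μ)| = μ * (1 * (H / (2 * μ) + |Real.log (2 * μ)|)) := by
      field_simp
    rw [h6]
    gcongr
  have hH2 : H ≤ A + 4 * μ * L := by
    have h1 : u p = Real.log H - 2 * Real.log q + 2 * L := by linarith
    have h2 : μ * (q ^ 2 * u p) = μ * (q ^ 2 * Real.log H) + μ * (-(2 * (q ^ 2 * Real.log q)))
        + 2 * μ * (q ^ 2 * L) := by rw [h1]; ring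
    have h3 : μ * (-(2 * (q ^ 2 * Real.log q))) ≤ μ * 1 := by gcongr
    have h4 : 2 * μ * (q ^ 2 * L) ≤ 2 * μ * L := by
      have : q ^ 2 * L ≤ L := mul_le_of_le_one_left hLpos (pow_le_one₀ hqpos.le hq1)
      gcongr
    rw [hA]
    linarith
  have hux : u x₀ ≤ 2 * L + Real.log H := by
    have h1 : r ^ 2 * Real.exp (u x₀) ≤ H := by
      have h2 : r ^ 2 * (r ^ 2 * Real.exp (u x₀)) ≤ r ^ 2 * H := by
        rw [hH]
        rw [htq] at hpc
        linarith
      exact le_of_mul_le_mul_left h2 (by positivity)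
    have h3 := Real.log_le_log (by positivity) h1
    rw [Real.log_mul (by positivity) (by positivity), Real.log_exp, Real.log_pow] at h3
    push_cast at h3
    linarith
  have hlH : Real.log H ≤ l * A + 2 * κ * L - Real.log l := by
    have h1 := Real.log_le_sub_one_of_pos (show 0 < l * H by positivity)
    rw [Real.log_mul hlpos.ne' hHpos.ne'] at h1
    have h2 : l * H ≤ l * (A + 4 * μ * L) := by gcongr
    have h3 : l * (A + 4 * μ * L) = l * A + 2 * κ * L := by rw [hl]; field_simp; ring
    linarith
  have hLd : L = -Real.log (bdist Ω x₀) + Real.log 2 := by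
    rw [hLdef, hr, Real.log_div hdpos.ne' (by norm_num)]; ring
  rw [Real.log_inv, Real.log_pow]
  push_cast
  rw [hLd] at hux hlH
  linarith

/-! ### The asymptotics -/

theorem compl_nonempty {N : ℕ} (hN : 2 ≤ N) {Ω : Set (Euc N)} (hΩb : Bornology.IsBounded Ω) :
    (Ωᶜ).Nonempty := by
  have : NeZero N := ⟨by omega⟩
  rw [nonempty_compl]
  rintro rfl
  exact NormedSpace.unbounded_univ ℝ (Euc N) hΩb

theorem large_solution_asymptotics {N : ℕ} (hN : 2 ≤ N)
    (Ω : Set (Euc N)) (hΩo : IsOpen Ω) (hΩne : Ω.Nonempty)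
    (hΩb : Bornology.IsBounded Ω) (hΩreg : BoundaryC3 Ω)
    {μ : ℝ} (hμ0 : 0 < μ) (hμH : μ < hardyConst Ω) :
    ∀ u : Euc N → ℝ, IsSolution μ Ω u → IsLarge Ω u →
      ∀ ε > 0, ∃ ρ > 0, ∀ x ∈ Ω, bdist Ω x < ρ →
        |u x / Real.log ((bdist Ω x) ^ 2)⁻¹ - 1| < ε := by
  intro u hu hL ε hε
  have hne : (Ωᶜ).Nonempty := compl_nonempty hN hΩb
  obtain ⟨ρ₁, h₁, C₁, H₁⟩ := lower_bound Ω hΩo hΩb hne hμ0 u hu hL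
  obtain ⟨ρ₂, h₂, C₂, H₂⟩ := upper_bound Ω hΩo hne hμ0 u hu hL (ε / 2) (by positivity)
  have hM : 0 < |C₁| + |C₂| + 1 := by positivity
  refine ⟨min (min ρ₁ ρ₂) (Real.exp (-(|C₁| + |C₂| + 1) / ε)), by positivity, ?_⟩
  intro x hx hd
  have hdpos : 0 < bdist Ω x := bdist_pos hΩo hne hx
  have hl := H₁ x hx (hd.trans_le ((min_le_left _ _).trans (min_le_left _ _)))
  have hr := H₂ x hx (hd.trans_le ((min_le_left _ _).trans (min_le_right _ _)))
  have hlog : Real.log (bdist Ω x) < -(|C₁| + |C₂| + 1) / ε :=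
    (Real.log_lt_iff_lt_exp hdpos).2 (hd.trans_le (min_le_right _ _))
  have hΛ : Real.log ((bdist Ω x) ^ 2)⁻¹ = -(2 * Real.log (bdist Ω x)) := by
    rw [Real.log_inv, Real.log_pow]; norm_num
  rw [lt_div_iff₀ hε] at hlog
  rw [hΛ] at hl hr ⊢
  set Λ := -(2 * Real.log (bdist Ω x)) with hΛd
  have hbig : 2 * (|C₁| + |C₂| + 1) < ε * Λ := by rw [hΛd]; linarith
  have hΛpos : 0 < Λ := by
    by_contra hcon
    have : ε * Λ ≤ 0 := mul_nonpos_of_nonneg_of_nonpos hε.le (not_lt.1 hcon)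
    linarith
  have e : u x / Λ - 1 = (u x - Λ) / Λ := by field_simp
  rw [e, abs_div, abs_of_pos hΛpos, div_lt_iff₀ hΛpos, abs_lt]
  have a1 := le_abs_self C₁
  have a2 := le_abs_self C₂
  have a3 := abs_nonneg C₁
  have a4 := abs_nonneg C₂
  constructor <;> nlinarith
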